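/- Sequential composition left-subdistributes over nondeterministic choice with respect to simulation: for probabilistic automata P, Q, R with pairwise disjoint state spaces, P · Q + P · R ≤ P · (Q + R) (where on the left the two occurrences of P are taken as disjoint copies). -/

import Mathlib

open scoped ENNReal

namespace PCKA

/-- A probabilistic automaton over the (non-silent) action alphabet `α`, with state
space `σ`.  Transition labels are `Option α`, where `none` plays the role of the
silent action `τ`; `trans x a μ` means `x —a→ μ` where `μ` is a (countably
supported) probability distribution over states, `init` is the initial
distribution and `final` the set of final states. -/
structure PAut (α : Type) (σ : Type) where
  trans : σ → Option α → PMF σ → Prop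
  init : PMF σ
  final : Set σ

/-- The lifting `S̄ ⊆ D(X) × D(Y)` of a relation `S ⊆ X × D(Y)`: `μ S̄ ν` iff there
are weights `p n` summing to `1`, states `x n` and distributions `νs n` with
`μ = Σ_n p n · δ_{x n}`, `x n S νs n` for each `n`, and `ν = Σ_n p n · νs n`. -/
def Lift {X Y : Type} (S : X → PMF Y → Prop) (μ : PMF X) (ν : PMF Y) : Prop :=
  ∃ (p : ℕ → ℝ≥0∞) (x : ℕ → X) (νs : ℕ → PMF Y),
    (∑' n, p n) = 1 ∧
    (∀ s, μ s = ∑' n, p n * (PMF.pure (x n)) s) ∧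
    (∀ n, S (x n) (νs n)) ∧
    (∀ t, ν t = ∑' n, p n * (νs n) t)

/-- The double lifting `T̿ ⊆ D(X) × D(Z)` of a relation `T ⊆ X × Z`, via a weight
function `w`. -/
def DLift {X Z : Type} (T : X → Z → Prop) (μ : PMF X) (ψ : PMF Z) : Prop :=
  ∃ w : X → Z → ℝ≥0∞,
    (∀ x z, 0 < w x z → T x z) ∧
    (∀ x, (∑' z, w x z) = μ x) ∧
    (∀ z, (∑' x, w x z) = ψ z)

/-- Flattening `π : D(D(Y)) → D(Y)`, `π(ψ) = Σ_{ν} ψ(ν)·ν`. -/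
noncomputable def flat {Y : Type} (ψ : PMF (PMF Y)) : PMF Y := ψ.bind id

/-- Single transition step, with the τ-transitions extended by reflexivity
(`x —τ→ δ_x` is always allowed). -/
def step {α σ : Type} (P : PAut α σ) (a : Option α) (x : σ) (μ : PMF σ) : Prop :=
  P.trans x a μ ∨ (a = none ∧ μ = PMF.pure x)

/-- Weak internal moves `⇒`: the reflexive-transitive closure of the lifted
(extended) τ-transition relation on distributions. -/
def WeakTau {α σ : Type} (P : PAut α σ) : PMF σ → PMF σ → Prop :=
  Relation.ReflTransGen (Lift (step P none))

/-- Weak `a`-transition `μ ⇒^a μ'`: `μ ⇒ μ₁ —ā→ μ₂ ⇒ μ'`. -/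
def WeakStep {α σ : Type} (P : PAut α σ) (a : Option α) (μ μ' : PMF σ) : Prop :=
  ∃ μ₁ μ₂, WeakTau P μ μ₁ ∧ Lift (step P a) μ₁ μ₂ ∧ WeakTau P μ₂ μ'

/-- A probabilistic simulation from `P` to `Q` (Deng et al. style). -/
structure IsSimulation {α σ τ' : Type} (P : PAut α σ) (Q : PAut α τ')
    (S : σ → PMF τ' → Prop) : Prop where
  init : ∃ ν₀', WeakTau Q Q.init ν₀' ∧ Lift S P.init ν₀'
  step : ∀ x a μ', P.trans x a μ' → ∀ ν, S x ν →
    ∃ ν', WeakStep Q a ν ν' ∧ Lift S μ' ν'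
  final : ∀ x ν, x ∈ P.final → S x ν →
    ∃ ν', WeakTau Q ν ν' ∧ ∀ y ∈ ν'.support, y ∈ Q.final

/-- A probabilistic weak forward simulation from `P` to `Q` (Segala style). -/
structure IsWFSimulation {α σ τ' : Type} (P : PAut α σ) (Q : PAut α τ')
    (S : σ → PMF τ' → Prop) : Prop where
  init : ∃ ψ₀ : PMF (PMF τ'), DLift S P.init ψ₀ ∧ WeakTau Q Q.init (flat ψ₀)
  step : ∀ x a μ', P.trans x a μ' → ∀ ν, S x ν →
    ∃ ψ : PMF (PMF τ'), WeakStep Q a ν (flat ψ) ∧ DLift S μ' ψ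
  final : ∀ x ν, x ∈ P.final → S x ν →
    ∃ ψ : PMF (PMF τ'), (∀ ρ ∈ ψ.support, ∀ y ∈ ρ.support, y ∈ Q.final) ∧
      WeakTau Q ν (flat ψ)

/-- `P ≤ Q`: there exists a probabilistic simulation from `P` to `Q`. -/
def Sim {α σ τ' : Type} (P : PAut α σ) (Q : PAut α τ') : Prop :=
  ∃ S, IsSimulation P Q S

/-- Simulation equivalence `P ≡ Q`. -/
def SimEquiv {α σ τ' : Type} (P : PAut α σ) (Q : PAut α τ') : Prop :=
  Sim P Q ∧ Sim Q P

/-- Convex combination `p·μ + (1−p)·ν` of two distributions. -/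
noncomputable def mix {X : Type} (p : ℝ≥0∞) (hp : p ≤ 1) (μ ν : PMF X) : PMF X :=
  ⟨fun x => p * μ x + (1 - p) * ν x, by
    refine ENNReal.summable.hasSum_iff.mpr ?_
    rw [ENNReal.tsum_add, ENNReal.tsum_mul_left, ENNReal.tsum_mul_left,
      μ.tsum_coe, ν.tsum_coe, mul_one, mul_one, add_tsub_cancel_of_le hp]⟩

/-- Product distribution `μ × ν`, with `(μ × ν)(x,y) = μ(x)·ν(y)`. -/
noncomputable def pprod {X Y : Type} (μ : PMF X) (ν : PMF Y) : PMF (X × Y) :=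
  μ.bind fun x => ν.map fun y => (x, y)

/-- The skip automaton `1`: one state, no transitions, that state is final. -/
noncomputable def skip (α : Type) : PAut α Unit :=
  ⟨fun _ _ _ => False, PMF.pure (), Set.univ⟩

/-- The deadlock automaton `0`: one state, no transitions, no final state. -/
noncomputable def deadlock (α : Type) : PAut α Unit :=
  ⟨fun _ _ _ => False, PMF.pure (), ∅⟩

/-- Nondeterministic choice `P + Q`: disjoint union of the two automata (realised
by the sum type) plus a fresh initial state `z = none` with `z —τ→ μ₀` and
`z —τ→ ν₀`. -/
noncomputable def nchoice {α σ τ' : Type} (P : PAut α σ) (Q : PAut α τ') :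
    PAut α (Option (σ ⊕ τ')) where
  trans := fun s a μ =>
    match s with
    | none => a = none ∧
        (μ = P.init.map (fun x => some (Sum.inl x)) ∨
         μ = Q.init.map (fun y => some (Sum.inr y)))
    | some (Sum.inl x) => ∃ μ', P.trans x a μ' ∧ μ = μ'.map (fun x => some (Sum.inl x))
    | some (Sum.inr y) => ∃ ν', Q.trans y a ν' ∧ μ = ν'.map (fun y => some (Sum.inr y))
  init := PMF.pure none
  final := {s | (∃ x ∈ P.final, s = some (Sum.inl x)) ∨ (∃ y ∈ Q.final, s = some (Sum.inr y))}

/-- Sequential composition `P · Q`: disjoint union (realised by the sum type),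
with a τ-transition from each final state of `P` to the initial distribution of
`Q`; initial distribution that of `P`, final states those of `Q`. -/
noncomputable def pseq {α σ τ' : Type} (P : PAut α σ) (Q : PAut α τ') :
    PAut α (σ ⊕ τ') where
  trans := fun s a μ =>
    match s with
    | Sum.inl x =>
        (∃ μ', P.trans x a μ' ∧ μ = μ'.map Sum.inl) ∨
        (a = none ∧ x ∈ P.final ∧ μ = Q.init.map Sum.inr)
    | Sum.inr y => ∃ ν', Q.trans y a ν' ∧ μ = ν'.map Sum.inr
  init := P.init.map Sum.inl
  final := {s | ∃ y ∈ Q.final, s = Sum.inr y}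

/-- Kleene star `P*`: a fresh state `z = none` which is initial and the only
final state, with `z —τ→ μ₀` and `x —τ→ δ_z` for each final state `x` of `P`. -/
noncomputable def pstar {α σ : Type} (P : PAut α σ) : PAut α (Option σ) where
  trans := fun s a μ =>
    match s with
    | none => a = none ∧ μ = P.init.map some
    | some x =>
        (∃ μ', P.trans x a μ' ∧ μ = μ'.map some) ∨
        (a = none ∧ x ∈ P.final ∧ μ = PMF.pure none)
  init := PMF.pure none
  final := {none}

/-- Probabilistic choice `P ⊕_p Q`: disjoint union with initial distribution
`p·μ₀ + (1−p)·ν₀`. -/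
noncomputable def pchoice {α σ τ' : Type} (p : ℝ≥0∞) (hp : p ≤ 1)
    (P : PAut α σ) (Q : PAut α τ') : PAut α (σ ⊕ τ') where
  trans := fun s a μ =>
    match s with
    | Sum.inl x => ∃ μ', P.trans x a μ' ∧ μ = μ'.map Sum.inl
    | Sum.inr y => ∃ ν', Q.trans y a ν' ∧ μ = ν'.map Sum.inr
  init := mix p hp (P.init.map Sum.inl) (Q.init.map Sum.inr)
  final := {s | (∃ x ∈ P.final, s = Sum.inl x) ∨ (∃ y ∈ Q.final, s = Sum.inr y)}

/-- CSP-style parallel composition `P ∥_A Q` synchronising on the frame `A`: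
actions in `A` must be performed jointly, all other actions (including τ) are
interleaved. -/
noncomputable def par {α σ τ' : Type} (A : Set α) (P : PAut α σ) (Q : PAut α τ') :
    PAut α (σ × τ') where
  trans := fun s a μπ => ∃ μ ν, μπ = pprod μ ν ∧
    ((∃ b ∈ A, a = some b ∧ P.trans s.1 a μ ∧ Q.trans s.2 a ν) ∨
     ((∀ b ∈ A, a ≠ some b) ∧ P.trans s.1 a μ ∧ ν = PMF.pure s.2) ∨
     ((∀ b ∈ A, a ≠ some b) ∧ Q.trans s.2 a ν ∧ μ = PMF.pure s.1))
  init := pprod P.init Q.init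
  final := {s | s.1 ∈ P.final ∧ s.2 ∈ Q.final}

theorem lift_bind {X Y Z : Type} (S : X → PMF Y → Prop) (μ : PMF Z) (g : Z → X)
    (k : Z → PMF Y) (h : ∀ z, S (g z) (k z)) : Lift S (μ.map g) (μ.bind k) := by
  classical
  obtain ⟨z0, hz0⟩ := μ.support_nonempty
  haveI : Countable μ.support := μ.support_countable
  obtain ⟨e0, he0⟩ := exists_injective_nat μ.support
  let e : Z → ℕ := fun z => if hz : z ∈ μ.support then e0 ⟨z, hz⟩ else 0
  haveI : Nonempty μ.support := ⟨⟨z0, hz0⟩⟩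
  let i : ℕ → Z := fun n => (Function.invFun e0 n : μ.support)
  have hi : ∀ z ∈ μ.support, i (e z) = z := by
    intro z hz
    simp only [i, e, dif_pos hz]
    rw [Function.leftInverse_invFun he0]
  have key : ∀ {W : Type} (q : Z → PMF W), (μ.map e).bind (fun n => q (i n)) = μ.bind q := by
    intro W q
    rw [PMF.bind_map]
    ext w
    simp only [PMF.bind_apply, Function.comp]
    refine tsum_congr fun z => ?_
    by_cases hz : z ∈ μ.support
    · rw [hi z hz]
    · rw [PMF.mem_support_iff, not_not] at hz
      simp [hz]
  refine ⟨fun n => (μ.map e) n, fun n => g (i n), fun n => k (i n), PMF.tsum_coe _, ?_,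
    fun n => h _, ?_⟩
  · intro s
    have := key (fun z => PMF.pure (g z))
    have h2 := congrArg (fun ρ : PMF X => ρ s) this
    simp only [PMF.bind_apply (μ.map e)] at h2
    rw [h2]
    rfl
  · intro t
    have h2 := congrArg (fun ρ : PMF Y => ρ t) (key k)
    simp only [PMF.bind_apply (μ.map e)] at h2
    rw [h2]

theorem lift_map {X Y Z : Type} (S : X → PMF Y → Prop) (μ : PMF Z) (g : Z → X)
    (k : Z → Y) (h : ∀ z, S (g z) (PMF.pure (k z))) : Lift S (μ.map g) (μ.map k) :=
  lift_bind S μ g (fun z => PMF.pure (k z)) h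

theorem lift_pure {X Y : Type} (S : X → PMF Y → Prop) (x : X) (ν : PMF Y) (h : S x ν) :
    Lift S (PMF.pure x) ν := by
  have := lift_bind S (PMF.pure ()) (fun _ => x) (fun _ => ν) (fun _ => h)
  simpa [PMF.pure_map] using this

theorem lift_refl {α σ : Type} (P : PAut α σ) (μ : PMF σ) : Lift (step P none) μ μ := by
  have := lift_map (step P none) μ id id (fun z => Or.inr ⟨rfl, rfl⟩)
  simpa [PMF.map_id] using this

theorem weakStep_single {α σ : Type} (P : PAut α σ) (x : σ) (a : Option α) (μ : PMF σ)
    (h : P.trans x a μ) : WeakStep P a (PMF.pure x) μ :=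
  ⟨_, _, .refl, lift_pure _ _ _ (Or.inl h), .refl⟩

/-- State matching from `P · Q + P · R` to `P · (Q + R)`. -/
def match_state {σ₁ σ₂ σ₃ : Type} : (σ₁ ⊕ σ₂) ⊕ (σ₁ ⊕ σ₃) → σ₁ ⊕ Option (σ₂ ⊕ σ₃)
  | .inl (.inl x) => .inl x
  | .inl (.inr y) => .inr (some (.inl y))
  | .inr (.inl x) => .inl x
  | .inr (.inr y) => .inr (some (.inr y))

/-- sequential composition left-subdistributes over
nondeterministic choice: `P · Q + P · R ≤ P · (Q + R)` (the two occurrences of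
`P` on the left are disjoint copies). -/
theorem seq_left_subdistrib_nchoice {α σ₁ σ₂ σ₃ : Type}
    (P : PAut α σ₁) (Q : PAut α σ₂) (R : PAut α σ₃) :
    Sim (nchoice (pseq P Q) (pseq P R)) (pseq P (nchoice Q R)) := by
  let S : Option ((σ₁ ⊕ σ₂) ⊕ (σ₁ ⊕ σ₃)) → PMF (σ₁ ⊕ Option (σ₂ ⊕ σ₃)) → Prop :=
    fun s ν => (s = none ∧ ν = P.init.map Sum.inl) ∨
      ∃ t, s = some t ∧ ν = PMF.pure (match_state t)
  have hS : ∀ t, S (some t) (PMF.pure (match_state t)) := fun t => Or.inr ⟨t, rfl, rfl⟩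
  refine ⟨S, ?_, ?_, ?_⟩
  · exact ⟨_, .refl, lift_pure _ _ _ (Or.inl ⟨rfl, rfl⟩)⟩
  · rintro s a μ' htr ν (⟨rfl, rfl⟩ | ⟨t, rfl, rfl⟩)
    · obtain ⟨rfl, rfl | rfl⟩ := htr
      · refine ⟨_, ⟨_, _, .refl, lift_refl _ _, .refl⟩, ?_⟩
        simp only [pseq, PMF.map_comp]
        exact lift_map _ _ _ _ (fun z => hS (.inl (.inl z)))
      · refine ⟨_, ⟨_, _, .refl, lift_refl _ _, .refl⟩, ?_⟩
        simp only [pseq, PMF.map_comp]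
        exact lift_map _ _ _ _ (fun z => hS (.inr (.inl z)))
    · rcases t with (x | y) | (x | y)
      · obtain ⟨μ, (⟨μ'', h, rfl⟩ | ⟨rfl, hx, rfl⟩), rfl⟩ := htr
        · refine ⟨μ''.map Sum.inl, weakStep_single _ _ _ _ (Or.inl ⟨_, h, rfl⟩), ?_⟩
          rw [PMF.map_comp]
          exact lift_map _ _ _ _ (fun z => hS (.inl (.inl z)))
        · refine ⟨Q.init.map (fun z => Sum.inr (some (Sum.inl z))),
            ⟨_, PMF.pure (Sum.inr none), .refl, lift_pure _ _ _ (Or.inl (Or.inr ⟨rfl, hx, ?_⟩)),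
              .single (lift_pure _ _ _ (Or.inl ⟨_, ⟨rfl, Or.inl rfl⟩, ?_⟩))⟩, ?_⟩
          · simp [nchoice, PMF.pure_map]
          · rw [PMF.map_comp]; rfl
          · rw [PMF.map_comp]
            exact lift_map _ _ _ _ (fun z => hS (.inl (.inr z)))
      · obtain ⟨μ, ⟨μ'', h, rfl⟩, rfl⟩ := htr
        refine ⟨(μ''.map (fun z => some (Sum.inl z))).map Sum.inr,
          weakStep_single _ _ _ _ ⟨_, ⟨_, h, rfl⟩, rfl⟩, ?_⟩
        rw [PMF.map_comp, PMF.map_comp]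
        exact lift_map _ _ _ _ (fun z => hS (.inl (.inr z)))
      · obtain ⟨μ, (⟨μ'', h, rfl⟩ | ⟨rfl, hx, rfl⟩), rfl⟩ := htr
        · refine ⟨μ''.map Sum.inl, weakStep_single _ _ _ _ (Or.inl ⟨_, h, rfl⟩), ?_⟩
          rw [PMF.map_comp]
          exact lift_map _ _ _ _ (fun z => hS (.inr (.inl z)))
        · refine ⟨R.init.map (fun z => Sum.inr (some (Sum.inr z))),
            ⟨_, PMF.pure (Sum.inr none), .refl, lift_pure _ _ _ (Or.inl (Or.inr ⟨rfl, hx, ?_⟩)),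
              .single (lift_pure _ _ _ (Or.inl ⟨_, ⟨rfl, Or.inr rfl⟩, ?_⟩))⟩, ?_⟩
          · simp [nchoice, PMF.pure_map]
          · rw [PMF.map_comp]; rfl
          · rw [PMF.map_comp]
            exact lift_map _ _ _ _ (fun z => hS (.inr (.inr z)))
      · obtain ⟨μ, ⟨μ'', h, rfl⟩, rfl⟩ := htr
        refine ⟨(μ''.map (fun z => some (Sum.inr z))).map Sum.inr,
          weakStep_single _ _ _ _ ⟨_, ⟨_, h, rfl⟩, rfl⟩, ?_⟩
        rw [PMF.map_comp, PMF.map_comp]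
        exact lift_map _ _ _ _ (fun z => hS (.inr (.inr z)))
  · rintro s ν hs hν
    rcases hs with ⟨_, ⟨y, hy, rfl⟩, rfl⟩ | ⟨_, ⟨y, hy, rfl⟩, rfl⟩
    · obtain ⟨h, _⟩ | ⟨t, ht, rfl⟩ := hν
      · cases h
      cases ht
      refine ⟨_, .refl, fun w hw => ?_⟩
      rw [PMF.support_pure] at hw
      cases hw
      exact ⟨_, Or.inl ⟨y, hy, rfl⟩, rfl⟩
    · obtain ⟨h, _⟩ | ⟨t, ht, rfl⟩ := hν
      · cases h
      cases ht
      refine ⟨_, .refl, fun w hw => ?_⟩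
      rw [PMF.support_pure] at hw
      cases hw
      exact ⟨_, Or.inr ⟨y, hy, rfl⟩, rfl⟩

end PCKA
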